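/- Let Φ : M_n(ℂ) → M_m(ℂ) be a unital positive linear map and let A be positive definite with mI ≤ A ≤ MI for scalars 0 < m < M. Then for all p ∈ (0,1], K(h,p) Φ(A)^p ≤ Φ(A^p) ≤ Φ(A)^p in the Loewner order, where h = M/m and K(h,p) is the generalized Kantorovich constant. -/

import Mathlib

open scoped ComplexOrder Kronecker

/-- Matrix power via the continuous functional calculus. -/
noncomputable def mpow {n : Type*} [Fintype n] [DecidableEq n]
    (A : Matrix n n ℂ) (p : ℝ) : Matrix n n ℂ :=
  cfc (fun x : ℝ => x ^ p) A

/-- The Loewner order on matrices. -/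
def LoewnerLE {n : Type*} [Fintype n] (A B : Matrix n n ℂ) : Prop :=
  (B - A).PosSemidef

/-- The matrix geometric mean `A # B = A^{1/2}(A^{-1/2} B A^{-1/2})^{1/2} A^{1/2}`. -/
noncomputable def geo {n : Type*} [Fintype n] [DecidableEq n]
    (A B : Matrix n n ℂ) : Matrix n n ℂ :=
  mpow A (1/2) * mpow (mpow A (-(1/2)) * B * mpow A (-(1/2))) (1/2) * mpow A (1/2)

/-- The generalized Kantorovich constant. -/
noncomputable def Kconst (h p : ℝ) : ℝ :=
  ((h ^ p - h) / ((p - 1) * (h - 1))) *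
    (((p - 1) / p) * ((h ^ p - 1) / (h ^ p - h))) ^ p

/-- The Specht ratio. -/
noncomputable def Specht (h : ℝ) : ℝ :=
  if h = 1 then 1 else (h - 1) * h ^ (1 / (h - 1)) / (Real.exp 1 * Real.log h)

/-!
For the upper bound, write `x ^ p` on `[0, 1]` as the uniform limit of its Bernstein polynomials.
Then `Φ (a ^ p)` is the limit of `∑ (k / N) ^ p • Φ E_k`, where the `E_k ≥ 0` are the Bernstein
basis polynomials evaluated at `a`, with `∑ E_k = 1` and `∑ (k / N) • E_k = a`. So it is enough to
prove Jensen's inequality for finite positive decompositions of `1`. Integrating resolvents, this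
comes down to `(∑ y_i • E_i)⁻¹ ≤ ∑ y_i⁻¹ • E_i`, and with `c = (∑ y_i • E_i)⁻¹` the difference of
the two sides is the sum of the positive elements `(1 - y_i c) (y_i⁻¹ E_i) (1 - y_i c)`.

For the lower bound, the chord of `x ^ p` over `[m, M]` lies below `x ^ p` on `[m, M]` and, by
weighted AM-GM, above `K(M / m, p) x ^ p` on `[0, ∞)`; positive unital maps preserve affine
functions. The constant is sharp for this chord: `K(M / m, p) x ^ p` is tangent to it.
-/

open Filter MeasureTheory Polynomial Real Set
open scoped NNReal Topology Ring unitInterval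

section Scalar

/-- The slope of the chord of `x ↦ x ^ p` over `[m, M]`. -/
noncomputable def rpowChordSlope (m M p : ℝ) : ℝ :=
  (M ^ p - m ^ p) / (M - m)

/-- The value at `0` of the line through the endpoints of the graph of `x ↦ x ^ p` over
`[m, M]`. -/
noncomputable def rpowChordIntercept (m M p : ℝ) : ℝ :=
  (M * m ^ p - m * M ^ p) / (M - m)

variable {m M p : ℝ}

lemma rpowChordSlope_pos (hm : 0 ≤ m) (hmM : m < M) (hp : 0 < p) : 0 < rpowChordSlope m M p :=
  div_pos (sub_pos.2 (rpow_lt_rpow hm hmM hp)) (sub_pos.2 hmM)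

lemma rpowChordIntercept_pos (hm : 0 < m) (hmM : m < M) (hp : p < 1) :
    0 < rpowChordIntercept m M p := by
  have hM : 0 < M := hm.trans hmM
  have h_split : ∀ {x : ℝ}, 0 < x → x = x ^ (1 - p) * x ^ p := fun hx => by
    rw [← rpow_add hx, sub_add_cancel, rpow_one]
  refine div_pos (sub_pos.2 ?_) (sub_pos.2 hmM)
  calc m * M ^ p = m ^ (1 - p) * (m ^ p * M ^ p) := by rw [← mul_assoc, ← h_split hm]
    _ < M ^ (1 - p) * (m ^ p * M ^ p) := by gcongr
    _ = M * m ^ p := by rw [mul_left_comm, ← h_split hM, mul_comm]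

lemma rpowChord_le_rpow (hm : 0 ≤ m) (hmM : m < M) (hp₀ : 0 ≤ p) (hp₁ : p ≤ 1) {x : ℝ}
    (hx : x ∈ Icc m M) :
    rpowChordSlope m M p * x + rpowChordIntercept m M p ≤ x ^ p := by
  have hd : 0 < M - m := sub_pos.2 hmM
  have h_concave := (concaveOn_rpow hp₀ hp₁).2 (mem_Ici.2 hm) (mem_Ici.2 (hm.trans hmM.le))
    (div_nonneg (sub_nonneg.2 hx.2) hd.le) (div_nonneg (sub_nonneg.2 hx.1) hd.le)
    (by field_simp; ring)
  simp only [smul_eq_mul] at h_concave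
  calc rpowChordSlope m M p * x + rpowChordIntercept m M p
      = (M - x) / (M - m) * m ^ p + (x - m) / (M - m) * M ^ p := by
        unfold rpowChordSlope rpowChordIntercept
        ring
    _ ≤ ((M - x) / (M - m) * m + (x - m) / (M - m) * M) ^ p := h_concave
    _ = x ^ p := by
        congr 1
        field_simp
        ring

lemma rpow_mul_rpow_mul_rpow_le_mul_add {α β x : ℝ} (hα : 0 ≤ α) (hβ : 0 ≤ β) (hx : 0 ≤ x)
    (hp₀ : 0 < p) (hp₁ : p < 1) :
    (α / p) ^ p * (β / (1 - p)) ^ (1 - p) * x ^ p ≤ α * x + β := by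
  have hq : 0 < 1 - p := sub_pos.2 hp₁
  calc (α / p) ^ p * (β / (1 - p)) ^ (1 - p) * x ^ p
      = (α / p * x) ^ p * (β / (1 - p)) ^ (1 - p) := by
        rw [mul_rpow (div_nonneg hα hp₀.le) hx, mul_right_comm]
    _ ≤ p * (α / p * x) + (1 - p) * (β / (1 - p)) :=
        geom_mean_le_arith_mean2_weighted hp₀.le hq.le (by positivity) (by positivity) (by ring)
    _ = α * x + β := by field_simp

lemma Kconst_eq (hm : 0 < m) (hmM : m < M) (hp₀ : 0 < p) (hp₁ : p < 1) :
    Kconst (M / m) p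
      = (rpowChordSlope m M p / p) ^ p * (rpowChordIntercept m M p / (1 - p)) ^ (1 - p) := by
  have hα := rpowChordSlope_pos hm.le hmM hp₀
  have hβ := rpowChordIntercept_pos hm hmM hp₁
  set α := rpowChordSlope m M p with hα_def
  set β := rpowChordIntercept m M p with hβ_def
  have hd : M - m ≠ 0 := (sub_pos.2 hmM).ne'
  have h_pow : (M / m) ^ p = M ^ p / m ^ p := div_rpow (hm.trans hmM).le hm.le p
  have h_one : (M / m) ^ p - 1 = (M - m) / m ^ p * α := by
    rw [h_pow, hα_def, rpowChordSlope]
    field_simp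
  have h_self : (M / m) ^ p - M / m = -((M - m) / (m * m ^ p) * β) := by
    rw [h_pow, hβ_def, rpowChordIntercept]
    field_simp
    ring
  have h_left : ((M / m) ^ p - M / m) / ((p - 1) * (M / m - 1)) = β / (1 - p) / m ^ p := by
    rw [h_self, div_sub_one hm.ne', ← neg_sub 1 p]
    field_simp
  have h_right : (p - 1) / p * (((M / m) ^ p - 1) / ((M / m) ^ p - M / m))
      = m * ((α / p) / (β / (1 - p))) := by
    rw [h_self, h_one, ← neg_sub 1 p]
    field_simp
  rw [Kconst, h_left, h_right, mul_rpow hm.le (by positivity),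
    div_rpow (by positivity) (by positivity), rpow_sub (by positivity), rpow_one]
  field_simp

lemma Kconst_mul_rpow_le_rpowChord (hm : 0 < m) (hmM : m < M) (hp₀ : 0 < p) (hp₁ : p < 1) {x : ℝ}
    (hx : 0 ≤ x) :
    Kconst (M / m) p * x ^ p ≤ rpowChordSlope m M p * x + rpowChordIntercept m M p := by
  rw [Kconst_eq hm hmM hp₀ hp₁]
  exact rpow_mul_rpow_mul_rpow_le_mul_add (rpowChordSlope_pos hm.le hmM hp₀).le
    (rpowChordIntercept_pos hm hmM hp₁).le hx hp₀ hp₁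

end Scalar

section FiniteJensen

variable {B ι : Type*} [CStarAlgebra B] [PartialOrder B] [StarOrderedRing B] {s : Finset ι}
  {E : ι → B} {y : ι → ℝ}

lemma ringInverse_sum_smul_le_sum_inv_smul (hE : ∀ i ∈ s, 0 ≤ E i) (hE_sum : ∑ i ∈ s, E i = 1)
    (hy : ∀ i ∈ s, 0 < y i) :
    (∑ i ∈ s, y i • E i)⁻¹ʳ ≤ ∑ i ∈ s, (y i)⁻¹ • E i := by
  set b := ∑ i ∈ s, y i • E i with hb_def
  by_cases hb : IsUnit b
  swap
  · rw [Ring.inverse_non_unit b hb]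
    exact Finset.sum_nonneg fun i hi => smul_nonneg (inv_nonneg.2 (hy i hi).le) (hE i hi)
  have hb_nonneg : 0 ≤ b := Finset.sum_nonneg fun i hi => smul_nonneg (hy i hi).le (hE i hi)
  have hc : IsSelfAdjoint b⁻¹ʳ := hb_nonneg.isSelfAdjoint.ringInverse
  have h_term : ∀ i ∈ s, (1 - y i • b⁻¹ʳ) * ((y i)⁻¹ • E i) * (1 - y i • b⁻¹ʳ)
      = (y i)⁻¹ • E i - E i * b⁻¹ʳ - b⁻¹ʳ * E i + b⁻¹ʳ * (y i • E i) * b⁻¹ʳ := by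
    intro i hi
    have h_ne := (hy i hi).ne'
    simp only [sub_mul, mul_sub, one_mul, mul_one, smul_mul_assoc, mul_smul_comm,
      smul_sub, smul_comm (y i)⁻¹, smul_inv_smul₀ h_ne]
    abel
  have h_sum : ∑ i ∈ s, (1 - y i • b⁻¹ʳ) * ((y i)⁻¹ • E i) * (1 - y i • b⁻¹ʳ)
      = ∑ i ∈ s, (y i)⁻¹ • E i - b⁻¹ʳ := by
    rw [Finset.sum_congr rfl h_term, Finset.sum_add_distrib, Finset.sum_sub_distrib,
      Finset.sum_sub_distrib, ← Finset.sum_mul, ← Finset.mul_sum, ← Finset.sum_mul,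
      ← Finset.mul_sum, hE_sum, ← hb_def, Ring.inverse_mul_cancel b hb]
    simp
  rw [← sub_nonneg, ← h_sum]
  refine Finset.sum_nonneg fun i hi => ?_
  exact IsSelfAdjoint.conjugate_nonneg (smul_nonneg (inv_nonneg.2 (hy i hi).le) (hE i hi))
    ((IsSelfAdjoint.one B).sub ((IsSelfAdjoint.all (y i)).smul hc))

lemma cfc_rpowIntegrand₀₁_eq_sub {p t : ℝ} (hp : p ≠ 1) (ht : 0 < t) {b : B} (hb : 0 ≤ b) :
    cfc (rpowIntegrand₀₁ p t) b
      = algebraMap ℝ B (t ^ (p - 1)) - t ^ p • (algebraMap ℝ B t + b)⁻¹ʳ := by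
  have h_ne : ∀ x ∈ spectrum ℝ b, t + x ≠ 0 := fun x hx =>
    (add_pos_of_pos_of_nonneg ht (spectrum_nonneg_of_nonneg hb hx)).ne'
  have h_cont : ContinuousOn (fun x : ℝ => (t + x)⁻¹) (spectrum ℝ b) :=
    ContinuousOn.inv₀ (by fun_prop) h_ne
  rw [rpowIntegrand₀₁_eq_sub hp ht,
    cfc_sub (fun _ : ℝ => t ^ (p - 1)) (fun x : ℝ => t ^ p * (t + x)⁻¹) b continuousOn_const
      (continuousOn_const.mul h_cont),
    cfc_const _ b, cfc_const_mul _ _ b h_cont, cfc_inv _ b h_ne, cfc_const_add t _ b, cfc_id' ℝ b]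

lemma sum_rpowIntegrand₀₁_smul_le_cfc_sum_smul {p t : ℝ} (hp : p ≠ 1) (ht : 0 < t)
    (hE : ∀ i ∈ s, 0 ≤ E i) (hE_sum : ∑ i ∈ s, E i = 1) (hy : ∀ i ∈ s, 0 ≤ y i) :
    ∑ i ∈ s, rpowIntegrand₀₁ p t (y i) • E i
      ≤ cfc (rpowIntegrand₀₁ p t) (∑ i ∈ s, y i • E i) := by
  have h_shift : algebraMap ℝ B t + ∑ i ∈ s, y i • E i = ∑ i ∈ s, (t + y i) • E i := by
    simp only [add_smul, Finset.sum_add_distrib, ← Finset.smul_sum, hE_sum,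
      Algebra.algebraMap_eq_smul_one]
  calc ∑ i ∈ s, rpowIntegrand₀₁ p t (y i) • E i
      = algebraMap ℝ B (t ^ (p - 1)) - t ^ p • ∑ i ∈ s, (t + y i)⁻¹ • E i := by
        simp only [rpowIntegrand₀₁_eq_sub hp ht, sub_smul, Finset.sum_sub_distrib,
          ← Finset.smul_sum, hE_sum, Algebra.algebraMap_eq_smul_one, mul_smul]
    _ ≤ algebraMap ℝ B (t ^ (p - 1)) - t ^ p • (∑ i ∈ s, (t + y i) • E i)⁻¹ʳ := by
        gcongr
        exact ringInverse_sum_smul_le_sum_inv_smul hE hE_sum fun i hi => by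
          have := hy i hi
          positivity
    _ = cfc (rpowIntegrand₀₁ p t) (∑ i ∈ s, y i • E i) := by
        rw [cfc_rpowIntegrand₀₁_eq_sub hp ht, h_shift]
        exact Finset.sum_nonneg fun i hi => smul_nonneg (hy i hi) (hE i hi)

variable (B) in
lemma exists_measure_rpow_eq_integral_cfc_rpowIntegrand₀₁ {p : ℝ} (hp : p ∈ Ioo 0 1) :
    ∃ μ : Measure ℝ, ∀ b : B, 0 ≤ b →
      IntegrableOn (fun t => cfc (rpowIntegrand₀₁ p t) b) (Ioi 0) μ ∧
        b ^ p = ∫ t in Ioi 0, cfc (rpowIntegrand₀₁ p t) b ∂μ := by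
  lift p to ℝ≥0 using hp.1.le
  have hp' : p ∈ Ioo (0 : ℝ≥0) 1 := by exact_mod_cast hp
  obtain ⟨μ, hμ⟩ := CFC.exists_measure_nnrpow_eq_integral_cfcₙ_rpowIntegrand₀₁ B hp'
  refine ⟨μ, fun b hb => ?_⟩
  have h_cfc : EqOn (fun t => cfcₙ (rpowIntegrand₀₁ p t) b) (fun t => cfc (rpowIntegrand₀₁ p t) b)
      (Ioi 0) := fun t ht => cfcₙ_eq_cfc
    ((continuousOn_rpowIntegrand₀₁_Ici hp ht).mono (quasispectrum_nonneg_of_nonneg b hb))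
  rw [← CFC.nnrpow_eq_rpow hp'.1, (hμ b hb).2]
  exact ⟨(hμ b hb).1.congr_fun h_cfc measurableSet_Ioi,
    setIntegral_congr_fun measurableSet_Ioi h_cfc⟩

lemma sum_rpow_smul_le_rpow_sum_smul {p : ℝ} (hp : p ∈ Ioo 0 1) (hE : ∀ i ∈ s, 0 ≤ E i)
    (hE_sum : ∑ i ∈ s, E i = 1) (hy : ∀ i ∈ s, 0 ≤ y i) :
    ∑ i ∈ s, y i ^ p • E i ≤ (∑ i ∈ s, y i • E i) ^ p := by
  obtain ⟨μ, hμ⟩ := exists_measure_rpow_eq_integral_cfc_rpowIntegrand₀₁ B hp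
  have h_scalar : ∀ i ∈ s, IntegrableOn (fun t => rpowIntegrand₀₁ p t (y i) • E i) (Ioi 0) μ ∧
      y i ^ p • E i = ∫ t in Ioi 0, rpowIntegrand₀₁ p t (y i) • E i ∂μ := by
    intro i hi
    have h_nonneg : 0 ≤ algebraMap ℝ B (y i) := algebraMap_nonneg B (hy i hi)
    obtain ⟨h_int, h_eq⟩ := hμ _ h_nonneg
    rw [CFC.rpow_eq_cfc_real] at h_eq
    simp only [cfc_algebraMap] at h_int h_eq
    simp only [Algebra.smul_def]
    exact ⟨h_int.mul_const _, h_eq ▸ (integral_mul_const_of_integrable h_int).symm⟩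
  obtain ⟨h_int, h_eq⟩ := hμ _ (Finset.sum_nonneg fun i hi => smul_nonneg (hy i hi) (hE i hi))
  calc ∑ i ∈ s, y i ^ p • E i
      = ∫ t in Ioi 0, ∑ i ∈ s, rpowIntegrand₀₁ p t (y i) • E i ∂μ := by
        rw [integral_finsetSum s fun i hi => (h_scalar i hi).1]
        exact Finset.sum_congr rfl fun i hi => (h_scalar i hi).2
    _ ≤ ∫ t in Ioi 0, cfc (rpowIntegrand₀₁ p t) (∑ i ∈ s, y i • E i) ∂μ :=
        setIntegral_mono_on (integrable_finsetSum s fun i hi => (h_scalar i hi).1) h_int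
          measurableSet_Ioi fun t ht =>
            sum_rpowIntegrand₀₁_smul_le_cfc_sum_smul hp.2.ne ht hE hE_sum hy
    _ = (∑ i ∈ s, y i • E i) ^ p := h_eq.symm

end FiniteJensen

section Bernstein

variable {A : Type*} [CStarAlgebra A] [PartialOrder A] [StarOrderedRing A] {a : A}

lemma spectrum_subset_unitInterval (ha₀ : 0 ≤ a) (ha₁ : a ≤ 1) : spectrum ℝ a ⊆ I := fun x hx =>
  ⟨spectrum_nonneg_of_nonneg ha₀ hx, by
    rw [← map_one (algebraMap ℝ A), le_algebraMap_iff_spectrum_le] at ha₁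
    exact ha₁ x hx⟩

lemma aeval_bernsteinPolynomial_nonneg (ha₀ : 0 ≤ a) (ha₁ : a ≤ 1) (N k : ℕ) :
    0 ≤ aeval a (bernsteinPolynomial ℝ N k) := by
  rw [← cfc_polynomial _ a ha₀.isSelfAdjoint]
  exact cfc_nonneg fun x hx => bernstein_nonneg (x := ⟨x, spectrum_subset_unitInterval ha₀ ha₁ hx⟩)

lemma sum_aeval_bernsteinPolynomial {R : Type*} [Ring R] [Algebra ℝ R] (a : R) (N : ℕ) :
    ∑ k ∈ Finset.range (N + 1), aeval a (bernsteinPolynomial ℝ N k) = 1 := by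
  rw [← map_sum, bernsteinPolynomial.sum, map_one]

lemma sum_div_smul_aeval_bernsteinPolynomial {R : Type*} [Ring R] [Algebra ℝ R] (a : R) {N : ℕ}
    (hN : N ≠ 0) :
    ∑ k ∈ Finset.range (N + 1), (k / N : ℝ) • aeval a (bernsteinPolynomial ℝ N k) = a := by
  have h_sum := congrArg (aeval a) (bernsteinPolynomial.sum_smul ℝ N)
  simp only [← Nat.cast_smul_eq_nsmul ℝ, map_sum, map_smul, aeval_X] at h_sum
  simp only [div_eq_inv_mul, mul_smul, ← Finset.smul_sum, h_sum]
  rw [smul_smul, inv_mul_cancel₀ (Nat.cast_ne_zero.2 hN), one_smul]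

lemma tendstoUniformlyOn_sum_bernsteinPolynomial {f : ℝ → ℝ} (hf : ContinuousOn f I) :
    TendstoUniformlyOn
      (fun N => (∑ k ∈ Finset.range (N + 1), f (k / N) • bernsteinPolynomial ℝ N k).eval)
      f atTop I := by
  rw [tendstoUniformlyOn_iff_tendstoUniformly_comp_coe]
  have h_unif := ContinuousMap.tendsto_iff_tendstoUniformly.1
    (bernsteinApproximation_uniform ⟨Set.domRestrict I f, hf.domRestrict⟩)
  convert! h_unif using 3 with N x
  simp [bernsteinApproximation.apply, bernstein, Finset.sum_range,
    eval_finsetSum, mul_comm, bernstein.z]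

lemma tendsto_sum_smul_aeval_bernsteinPolynomial (ha₀ : 0 ≤ a) (ha₁ : a ≤ 1) {f : ℝ → ℝ}
    (hf : ContinuousOn f I) :
    Tendsto (fun N : ℕ => ∑ k ∈ Finset.range (N + 1),
      f (k / N) • aeval a (bernsteinPolynomial ℝ N k)) atTop (𝓝 (cfc f a)) := by
  have h_cfc := tendsto_cfc_fun (a := a) ((tendstoUniformlyOn_sum_bernsteinPolynomial hf).mono
    (spectrum_subset_unitInterval ha₀ ha₁)) (.of_forall fun N => Polynomial.continuousOn _)
  simp_rw [cfc_polynomial _ a ha₀.isSelfAdjoint] at h_cfc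
  simpa only [map_sum, map_smul] using h_cfc

end Bernstein

section PositiveMap

lemma cfc_mul_add_eq {A : Type*} [CStarAlgebra A] {a : A} {α β : ℝ} (ha : IsSelfAdjoint a) :
    cfc (fun x : ℝ => α * x + β) a = α • a + algebraMap ℝ A β := by
  rw [cfc_add_const β (fun x : ℝ => α * x) a, cfc_const_mul_id α a]

variable {A B : Type*} [CStarAlgebra A] [PartialOrder A] [StarOrderedRing A] [CStarAlgebra B]
  [PartialOrder B] [StarOrderedRing B] {Φ : A →ₚ[ℂ] B} {a : A} {p : ℝ}

lemma smul_rpow_of_nonneg {r : ℝ} (hr : 0 ≤ r) (ha : 0 ≤ a) (hp : 0 ≤ p) :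
    (r • a) ^ p = r ^ p • a ^ p := by
  have h_cont := continuous_rpow_const hp
  rw [CFC.rpow_eq_cfc_real (smul_nonneg hr ha), CFC.rpow_eq_cfc_real ha,
    ← cfc_comp_smul r (fun x : ℝ => x ^ p) a h_cont.continuousOn,
    ← cfc_smul _ _ a h_cont.continuousOn]
  exact cfc_congr fun x hx => mul_rpow hr (spectrum_nonneg_of_nonneg ha hx)

lemma map_rpow_le_rpow_map_of_le_one (hΦ : Φ 1 = 1) (ha₀ : 0 ≤ a) (ha₁ : a ≤ 1)
    (hp : p ∈ Ioo 0 1) : Φ (a ^ p) ≤ Φ a ^ p := by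
  let E (N k : ℕ) : A := aeval a (bernsteinPolynomial ℝ N k)
  have h_lim : Tendsto (fun N : ℕ => ∑ k ∈ Finset.range (N + 1), (k / N : ℝ) ^ p • Φ (E N k))
      atTop (𝓝 (Φ (a ^ p))) := by
    have h_rpow := tendsto_sum_smul_aeval_bernsteinPolynomial ha₀ ha₁
      (continuous_rpow_const hp.1.le).continuousOn
    rw [← CFC.rpow_eq_cfc_real ha₀] at h_rpow
    simpa [Function.comp_def, PositiveLinearMap.map_smul_of_tower] using
      ((map_continuous Φ).tendsto _).comp h_rpow
  refine le_of_tendsto h_lim ((eventually_ne_atTop 0).mono fun N hN => ?_)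
  have h_mean : ∑ k ∈ Finset.range (N + 1), (k / N : ℝ) • Φ (E N k) = Φ a := by
    simp only [E, ← PositiveLinearMap.map_smul_of_tower, ← map_sum,
      sum_div_smul_aeval_bernsteinPolynomial a hN]
  have h_one : ∑ k ∈ Finset.range (N + 1), Φ (E N k) = 1 := by
    rw [← map_sum, sum_aeval_bernsteinPolynomial, hΦ]
  rw [← h_mean]
  exact sum_rpow_smul_le_rpow_sum_smul hp
    (fun k _ => Φ.map_nonneg (aeval_bernsteinPolynomial_nonneg ha₀ ha₁ N k)) h_one
    fun k _ => by positivity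

theorem map_rpow_le_rpow_map (hΦ : Φ 1 = 1) (ha : 0 ≤ a) (hp : p ∈ Icc 0 1) :
    Φ (a ^ p) ≤ Φ a ^ p := by
  obtain hp₀ | hp₀ := hp.1.eq_or_lt
  · rw [← hp₀, CFC.rpow_zero a, CFC.rpow_zero _ (Φ.map_nonneg ha), hΦ]
  obtain hp₁ | hp₁ := hp.2.eq_or_lt
  · rw [hp₁, CFC.rpow_one a, CFC.rpow_one _ (Φ.map_nonneg ha)]
  set r := ‖a‖ + 1
  have hr : 0 < r := by positivity
  have hb₀ : 0 ≤ r⁻¹ • a := smul_nonneg (inv_nonneg.2 hr.le) ha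
  have hb₁ : r⁻¹ • a ≤ 1 := by
    rw [inv_smul_le_iff_of_pos hr, ← Algebra.algebraMap_eq_smul_one]
    exact ha.isSelfAdjoint.le_algebraMap_norm_self.trans
      (algebraMap_mono A (le_add_of_nonneg_right zero_le_one))
  have h_scaled := map_rpow_le_rpow_map_of_le_one hΦ hb₀ hb₁ ⟨hp₀, hp₁⟩
  calc Φ (a ^ p) = r ^ p • Φ ((r⁻¹ • a) ^ p) := by
        rw [← PositiveLinearMap.map_smul_of_tower, ← smul_rpow_of_nonneg hr.le hb₀ hp.1,
          smul_inv_smul₀ hr.ne']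
    _ ≤ r ^ p • Φ (r⁻¹ • a) ^ p := by gcongr
    _ = Φ a ^ p := by
        rw [← smul_rpow_of_nonneg hr.le (Φ.map_nonneg hb₀) hp.1,
          ← PositiveLinearMap.map_smul_of_tower, smul_inv_smul₀ hr.ne']

theorem smul_cfc_map_le_map_cfc {f : ℝ → ℝ} {α β κ : ℝ} (hΦ : Φ 1 = 1) (ha : IsSelfAdjoint a)
    (hf : ContinuousOn f (spectrum ℝ a)) (hf' : ContinuousOn f (spectrum ℝ (Φ a)))
    (h_lower : ∀ x ∈ spectrum ℝ a, α * x + β ≤ f x)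
    (h_upper : ∀ x ∈ spectrum ℝ (Φ a), κ * f x ≤ α * x + β) :
    κ • cfc f (Φ a) ≤ Φ (cfc f a) := by
  calc κ • cfc f (Φ a) = cfc (fun x => κ * f x) (Φ a) := (cfc_const_mul κ f (Φ a) hf').symm
    _ ≤ cfc (fun x => α * x + β) (Φ a) := cfc_mono h_upper (continuousOn_const.mul hf')
    _ = α • Φ a + algebraMap ℝ B β := cfc_mul_add_eq (ha.map' Φ)
    _ = Φ (α • a + algebraMap ℝ A β) := by
        simp only [map_add, Algebra.algebraMap_eq_smul_one, PositiveLinearMap.map_smul_of_tower, hΦ]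
    _ = Φ (cfc (fun x => α * x + β) a) := by rw [cfc_mul_add_eq ha]
    _ ≤ Φ (cfc f a) := Φ.monotone' (cfc_mono h_lower (hg := hf))

theorem Kconst_smul_rpow_map_le_map_rpow {m M : ℝ} (hΦ : Φ 1 = 1) (hm : 0 < m) (hmM : m < M)
    (hma : algebraMap ℝ A m ≤ a) (haM : a ≤ algebraMap ℝ A M) (hp₀ : 0 < p) (hp₁ : p < 1) :
    Kconst (M / m) p • Φ a ^ p ≤ Φ (a ^ p) := by
  have ha : 0 ≤ a := (algebraMap_nonneg A hm.le).trans hma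
  have h_spec : spectrum ℝ a ⊆ Icc m M := fun x hx =>
    ⟨(algebraMap_le_iff_le_spectrum ha.isSelfAdjoint).1 hma x hx,
      (le_algebraMap_iff_spectrum_le ha.isSelfAdjoint).1 haM x hx⟩
  have h_cont := continuous_rpow_const hp₀.le
  rw [CFC.rpow_eq_cfc_real ha, CFC.rpow_eq_cfc_real (Φ.map_nonneg ha)]
  exact smul_cfc_map_le_map_cfc hΦ ha.isSelfAdjoint h_cont.continuousOn h_cont.continuousOn
    (fun x hx => rpowChord_le_rpow hm.le hmM hp₀.le hp₁.le (h_spec hx))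
    fun x hx => Kconst_mul_rpow_le_rpowChord hm hmM hp₀ hp₁
      (spectrum_nonneg_of_nonneg (Φ.map_nonneg ha) hx)

theorem reverse_jensen_kantorovich_general {m M : ℝ} (hΦ : Φ 1 = 1) (hm : 0 < m) (hmM : m < M)
    (hma : algebraMap ℝ A m ≤ a) (haM : a ≤ algebraMap ℝ A M) (hp₀ : 0 < p) (hp₁ : p ≤ 1) :
    Kconst (M / m) p • Φ a ^ p ≤ Φ (a ^ p) ∧ Φ (a ^ p) ≤ Φ a ^ p := by
  have ha : 0 ≤ a := (algebraMap_nonneg A hm.le).trans hma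
  refine ⟨?_, map_rpow_le_rpow_map hΦ ha ⟨hp₀.le, hp₁⟩⟩
  obtain rfl | hp₁ := hp₁.eq_or_lt
  · -- Division by zero makes `Kconst h 1 = 0`, not the limit `1` of `Kconst h p` as `p → 1`.
    have h_zero : Kconst (M / m) 1 = 0 := by simp [Kconst]
    rw [h_zero, zero_smul, CFC.rpow_one a]
    exact Φ.map_nonneg ha
  · exact Kconst_smul_rpow_map_le_map_rpow hΦ hm hmM hma haM hp₀ hp₁

end PositiveMap

section Matrix

open scoped MatrixOrder Matrix.Norms.L2Operator

lemma loewnerLE_iff_le {n : Type*} [Fintype n] {A B : Matrix n n ℂ} : LoewnerLE A B ↔ A ≤ B :=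
  Matrix.le_iff.symm

lemma mpow_eq_rpow {n : Type*} [Fintype n] [DecidableEq n] {A : Matrix n n ℂ} (hA : 0 ≤ A)
    (p : ℝ) : mpow A p = A ^ p :=
  (CFC.rpow_eq_cfc_real hA).symm

end Matrix

theorem reverse_jensen_kantorovich {n m : Type*} [Fintype n] [DecidableEq n]
    [Fintype m] [DecidableEq m]
    (Φ : Matrix n n ℂ →ₗ[ℂ] Matrix m m ℂ)
    (hΦpos : ∀ A : Matrix n n ℂ, A.PosSemidef → (Φ A).PosSemidef)
    (hΦunital : Φ 1 = 1)
    (A : Matrix n n ℂ) (hA : A.PosDef)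
    (m₀ M₀ : ℝ) (hm : 0 < m₀) (hmM : m₀ < M₀)
    (hlow : LoewnerLE (m₀ • (1 : Matrix n n ℂ)) A)
    (hup : LoewnerLE A (M₀ • (1 : Matrix n n ℂ)))
    (p : ℝ) (hp0 : 0 < p) (hp1 : p ≤ 1) :
    LoewnerLE (Kconst (M₀ / m₀) p • mpow (Φ A) p) (Φ (mpow A p)) ∧
      LoewnerLE (Φ (mpow A p)) (mpow (Φ A) p) := by
  open scoped MatrixOrder Matrix.Norms.L2Operator in
  let Ψ : Matrix n n ℂ →ₚ[ℂ] Matrix m m ℂ := .mk₀ Φ fun X hX =>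
    Matrix.nonneg_iff_posSemidef.2 (hΦpos X (Matrix.nonneg_iff_posSemidef.1 hX))
  have hA_nonneg : 0 ≤ A := Matrix.nonneg_iff_posSemidef.2 hA.posSemidef
  have hΦA_nonneg : 0 ≤ Φ A := Ψ.map_nonneg hA_nonneg
  simp only [loewnerLE_iff_le, mpow_eq_rpow hA_nonneg, mpow_eq_rpow hΦA_nonneg,
    ← Algebra.algebraMap_eq_smul_one] at hlow hup ⊢
  exact reverse_jensen_kantorovich_general (Φ := Ψ) hΦunital hm hmM hlow hup hp0 hp1
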